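/- arXiv:2604.20525 — 3 statements merged into one kernel-verified Lean document; each statement's English description precedes it below -/
import Mathlib

section
/- Let h > 0 and let z ∈ ℂ with Re z > 0. Let T_z be the integral operator on L²(ℝ) with kernel K_z(y,y′) = (1/(2πh)) ∫_ℝ e^{i(y−y′)η/h} e^{−z(((y+y′)/2)² + η²)} dη. Then for every k ∈ ℕ₀, T_z φ_k = ((1 − hz)^k/(1 + hz)^{k+1}) φ_k, where φ_k is the rescaled Hermite function. -/
/-!
STATEMENT 10: Mehler's formula.  For h > 0 and z ∈ ℂ with Re z > 0, the
integral operator T_z with kernel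
K_z(y,y′) = (1/(2πh)) ∫ e^{i(y−y′)η/h} e^{−z(((y+y′)/2)²+η²)} dη satisfies
T_z φ_k = ((1−hz)^k/(1+hz)^{k+1}) φ_k for every k ∈ ℕ₀, where φ_k is the
rescaled Hermite function.
-/

open MeasureTheory Complex Real

noncomputable section

/-- The Hermite function `ψ_k(x) = (π^{−1/4}/√(2^k k!)) (d/dx − x)^k e^{−x²/2}`. -/
def hermiteFun (k : ℕ) : ℝ → ℝ := fun x =>
  (Real.pi ^ (-(1/4 : ℝ)) / Real.sqrt ((2 : ℝ) ^ k * (Nat.factorial k))) *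
    ((fun f : ℝ → ℝ => fun t => deriv f t - t * f t)^[k]
      (fun t => Real.exp (-t ^ 2 / 2))) x

/-- The semiclassically rescaled Hermite function `φ_k(y) = h^{−1/4} ψ_k(h^{−1/2} y)`. -/
def scaledHermite (h : ℝ) (k : ℕ) (y : ℝ) : ℝ :=
  h ^ (-(1/4 : ℝ)) * hermiteFun k (h ^ (-(1/2 : ℝ)) * y)

/-- The kernel of the semiclassical Weyl quantization of the Gaussian symbol
`e^{−z(y²+η²)}`. -/
def gaussKernel (h : ℝ) (z : ℂ) (y y' : ℝ) : ℂ :=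
  ((1 / (2 * Real.pi * h) : ℝ) : ℂ) *
    ∫ η : ℝ, Complex.exp (Complex.I * (((y - y') * η / h : ℝ) : ℂ)) *
      Complex.exp (-z * ((((y + y') / 2) ^ 2 + η ^ 2 : ℝ) : ℂ))

/-!
Write `A = h d/dy - y` for the raising operator of the harmonic oscillator. The kernel of `T_z` is
an explicit Gaussian in `(y, y')`, and comparing its two logarithmic derivatives gives the
intertwining relation `(1 + hz) T_z A = (1 - hz) A T_z`. Since `φ_{k+1}` is a multiple of `A φ_k`,
each step up the ladder multiplies the eigenvalue by `(1 - hz) / (1 + hz)`; the ground state is a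
Gaussian integral. The two complex square roots produced by the Gaussian integrals in `η` and `y'`
have arguments in the right half-plane, so their product is the principal root of
`(2πh / (1 + hz))²`.
-/

lemma hasDerivAt_eval_mul_exp_neg_mul_sq (P : Polynomial ℝ) (b x : ℝ) :
    HasDerivAt (fun x ↦ P.eval x * Real.exp (-b * x ^ 2))
      ((P.derivative - Polynomial.C (2 * b) * Polynomial.X * P).eval x * Real.exp (-b * x ^ 2))
      x := by
  have h := (P.hasDerivAt x).fun_mul ((hasDerivAt_pow 2 x).const_mul (-b)).exp
  refine h.congr_deriv ?_
  simp only [Polynomial.eval_sub, Polynomial.eval_mul, Polynomial.eval_C, Polynomial.eval_X]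
  push_cast
  ring

open Polynomial in
/-- Functions of the form `P(x) e^{-b x²}` with `P` a polynomial. The Hermite functions are of this
form, which supplies their smoothness and decay. -/
def IsPolyGaussian (b : ℝ) (f : ℝ → ℝ) : Prop :=
  ∃ P : ℝ[X], f = fun x ↦ P.eval x * Real.exp (-b * x ^ 2)

namespace IsPolyGaussian

variable {b : ℝ} {f g : ℝ → ℝ}

lemma const_mul (hf : IsPolyGaussian b f) (c : ℝ) : IsPolyGaussian b (fun x ↦ c * f x) := by
  obtain ⟨P, rfl⟩ := hf
  exact ⟨Polynomial.C c * P, by simp [mul_assoc]⟩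

lemma id_mul (hf : IsPolyGaussian b f) : IsPolyGaussian b (fun x ↦ x * f x) := by
  obtain ⟨P, rfl⟩ := hf
  exact ⟨Polynomial.X * P, by simp [mul_assoc]⟩

lemma sub (hf : IsPolyGaussian b f) (hg : IsPolyGaussian b g) :
    IsPolyGaussian b (fun x ↦ f x - g x) := by
  obtain ⟨P, rfl⟩ := hf
  obtain ⟨Q, rfl⟩ := hg
  exact ⟨P - Q, by simp [sub_mul]⟩

lemma differentiable (hf : IsPolyGaussian b f) : Differentiable ℝ f := by
  obtain ⟨P, rfl⟩ := hf
  exact fun x ↦ (hasDerivAt_eval_mul_exp_neg_mul_sq P b x).differentiableAt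

lemma deriv (hf : IsPolyGaussian b f) : IsPolyGaussian b (deriv f) := by
  obtain ⟨P, rfl⟩ := hf
  exact ⟨_, funext fun x ↦ (hasDerivAt_eval_mul_exp_neg_mul_sq P b x).deriv⟩

lemma integrable (hf : IsPolyGaussian b f) (hb : 0 < b) : Integrable f := by
  obtain ⟨P, rfl⟩ := hf
  induction P using Polynomial.induction_on' with
  | add p q hp hq => simpa only [Polynomial.eval_add, add_mul] using! hp.add hq
  | monomial n c =>
    have hn : (-1 : ℝ) < n := by linarith [n.cast_nonneg (α := ℝ)]
    simpa only [Polynomial.eval_monomial, Real.rpow_natCast, mul_assoc] using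
      (integrable_rpow_mul_exp_neg_mul_sq hb hn).const_mul c

end IsPolyGaussian

section Hermite

/-- The semiclassical raising (creation) operator `h d/dy - y` of the harmonic oscillator, without
its usual normalization. -/
def raising (h : ℝ) (f : ℝ → ℂ) (y : ℝ) : ℂ :=
  h * deriv f y - y * f y

lemma raising_const_mul (h : ℝ) (c : ℂ) (f : ℝ → ℂ) (y : ℝ) :
    raising h (fun x ↦ c * f x) y = c * raising h f y := by
  rw [raising, raising, deriv_const_mul_field]
  ring

lemma sqrt_mul_hermiteFun_succ (k : ℕ) (x : ℝ) :
    √(2 * (k + 1)) * hermiteFun (k + 1) x = deriv (hermiteFun k) x - x * hermiteFun k x := by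
  have hnorm : √((2 : ℝ) ^ (k + 1) * (k + 1).factorial) =
      √(2 * (k + 1)) * √((2 : ℝ) ^ k * k.factorial) := by
    rw [← Real.sqrt_mul (by positivity)]
    congr 1
    rw [Nat.factorial_succ]
    push_cast
    ring
  unfold hermiteFun
  simp only [Function.iterate_succ_apply', hnorm,
    deriv_const_mul_field]
  field_simp

variable {h : ℝ}

lemma sqrt_mul_scaledHermite_succ (hh : 0 < h) (k : ℕ) (y : ℝ) :
    √(2 * (k + 1) * h) * scaledHermite h (k + 1) y =
      h * deriv (scaledHermite h k) y - y * scaledHermite h k y := by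
  have hroot : h ^ (-(1 / 2 : ℝ)) = (√h)⁻¹ := by rw [Real.rpow_neg hh.le, Real.sqrt_eq_rpow]
  have hderiv : deriv (scaledHermite h k) y =
      h ^ (-(1 / 4 : ℝ)) * ((√h)⁻¹ * deriv (hermiteFun k) ((√h)⁻¹ * y)) := by
    unfold scaledHermite
    rw [hroot, deriv_const_mul_field, deriv_comp_mul_left, smul_eq_mul]
  have hladder := sqrt_mul_hermiteFun_succ k ((√h)⁻¹ * y)
  rw [hderiv, scaledHermite, scaledHermite, hroot, Real.sqrt_mul (by positivity)]
  calc √(2 * (k + 1)) * √h * (h ^ (-(1 / 4 : ℝ)) * hermiteFun (k + 1) ((√h)⁻¹ * y))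
      = h ^ (-(1 / 4 : ℝ)) * √h *
          (deriv (hermiteFun k) ((√h)⁻¹ * y) - (√h)⁻¹ * y * hermiteFun k ((√h)⁻¹ * y)) := by
        rw [← hladder]
        ring
    _ = h * (h ^ (-(1 / 4 : ℝ)) * ((√h)⁻¹ * deriv (hermiteFun k) ((√h)⁻¹ * y))) -
          y * (h ^ (-(1 / 4 : ℝ)) * hermiteFun k ((√h)⁻¹ * y)) := by
        field_simp
        linear_combination deriv (hermiteFun k) (y / √h) * Real.sq_sqrt hh.le

lemma scaledHermite_zero (hh : 0 < h) (y : ℝ) :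
    scaledHermite h 0 y =
      h ^ (-(1 / 4 : ℝ)) * π ^ (-(1 / 4 : ℝ)) * Real.exp (-(2 * h)⁻¹ * y ^ 2) := by
  have hsq : (h ^ (-(1 / 2 : ℝ))) ^ 2 = h⁻¹ := by
    rw [← Real.rpow_natCast, ← Real.rpow_mul hh.le, ← Real.rpow_neg_one]
    norm_num
  have hexp : -(h ^ (-(1 / 2 : ℝ)) * y) ^ 2 / 2 = -(2 * h)⁻¹ * y ^ 2 := by
    rw [mul_pow, hsq, mul_inv]
    ring
  simp only [scaledHermite, hermiteFun, Function.iterate_zero, id, hexp, pow_zero,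
    Nat.factorial_zero, Nat.cast_one, mul_one, Real.sqrt_one, div_one, mul_assoc]

lemma isPolyGaussian_scaledHermite (hh : 0 < h) (k : ℕ) :
    IsPolyGaussian (2 * h)⁻¹ (scaledHermite h k) := by
  induction k with
  | zero =>
    exact ⟨Polynomial.C (h ^ (-(1 / 4 : ℝ)) * π ^ (-(1 / 4 : ℝ))),
      funext fun y ↦ by rw [scaledHermite_zero hh, Polynomial.eval_C]⟩
  | succ k ih =>
    have hsucc : scaledHermite h (k + 1) = fun y ↦ (√(2 * (k + 1) * h))⁻¹ *
        (h * deriv (scaledHermite h k) y - y * scaledHermite h k y) := by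
      funext y
      rw [← sqrt_mul_scaledHermite_succ hh, inv_mul_cancel_left₀ (by positivity)]
    rw [hsucc]
    exact ((ih.deriv.const_mul h).sub ih.id_mul).const_mul _

lemma raising_scaledHermite (hh : 0 < h) (k : ℕ) (y : ℝ) :
    raising h (fun x ↦ (scaledHermite h k x : ℂ)) y =
      √(2 * (k + 1) * h) * (scaledHermite h (k + 1) y : ℂ) := by
  have hd := ((isPolyGaussian_scaledHermite hh k).differentiable y).hasDerivAt.ofReal_comp
  rw [raising, hd.deriv, ← Complex.ofReal_mul √_, sqrt_mul_scaledHermite_succ hh]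
  push_cast
  rfl

end Hermite

section HalfPlane

lemma re_inv_pos {a : ℂ} (ha : 0 < a.re) : 0 < a⁻¹.re := by
  rw [Complex.inv_re]
  exact div_pos ha (Complex.normSq_pos.2 (Complex.ne_zero_of_re_pos ha))

lemma re_ofReal_mul_pos {r : ℝ} {a : ℂ} (hr : 0 < r) (ha : 0 < a.re) : 0 < (r * a).re := by
  rw [Complex.re_ofReal_mul]
  exact mul_pos hr ha

lemma re_one_add_pos {a : ℂ} (ha : 0 < a.re) : 0 < (1 + a).re := by
  rw [Complex.add_re, Complex.one_re]
  exact add_pos one_pos ha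

lemma mul_cpow_of_re_pos {a b : ℂ} (ha : 0 < a.re) (hb : 0 < b.re) (r : ℂ) :
    (a * b) ^ r = a ^ r * b ^ r := by
  have ha0 := Complex.ne_zero_of_re_pos ha
  have hb0 := Complex.ne_zero_of_re_pos hb
  have harg_a := abs_lt.1 (Complex.abs_arg_lt_pi_div_two_iff.2 (.inl ha))
  have harg_b := abs_lt.1 (Complex.abs_arg_lt_pi_div_two_iff.2 (.inl hb))
  have harg : a.arg + b.arg ∈ Set.Ioc (-π) π := ⟨by linarith, by linarith⟩
  rw [Complex.cpow_def_of_ne_zero (mul_ne_zero ha0 hb0), Complex.cpow_def_of_ne_zero ha0,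
    Complex.cpow_def_of_ne_zero hb0, Complex.log_mul ha0 hb0 harg, add_mul, Complex.exp_add]

lemma mul_cpow_half_eq {a b c : ℂ} (ha : 0 < a.re) (hb : 0 < b.re) (hc : 0 < c.re)
    (habc : a * b = c ^ 2) : a ^ (1 / 2 : ℂ) * b ^ (1 / 2 : ℂ) = c := by
  rw [← mul_cpow_of_re_pos ha hb, habc, one_div, Complex.sq_cpow_two_inv hc]

end HalfPlane

section Kernel

variable {h : ℝ} {z : ℂ}

/-- The coefficient `α` in the exponent `α (y² + y'²) / 2 + β y y'` of the kernel of `T_z`. -/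
def exponentDiag (h : ℝ) (z : ℂ) : ℂ := -(z + (z * h ^ 2)⁻¹) / 2

/-- The coefficient `β` in the exponent `α (y² + y'²) / 2 + β y y'` of the kernel of `T_z`. -/
def exponentCross (h : ℝ) (z : ℂ) : ℂ := -(z - (z * h ^ 2)⁻¹) / 2

/-- The exponent `α (y² + y'²) / 2 + β y y'` of the kernel of `T_z`. -/
def kernelExponent (h : ℝ) (z : ℂ) (y y' : ℝ) : ℂ :=
  exponentDiag h z * (y ^ 2 + y' ^ 2) / 2 + exponentCross h z * y * y'

lemma kernelExponent_eq (h : ℝ) (z : ℂ) (y y' : ℝ) :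
    kernelExponent h z y y' =
      -((((y + y') / 2) ^ 2 : ℝ) * z + (((y - y') / h) ^ 2 / 4 : ℝ) * z⁻¹) := by
  rw [kernelExponent, exponentDiag, exponentCross, mul_inv]
  push_cast
  ring

lemma re_kernelExponent_nonpos (h : ℝ) (hz : 0 < z.re) (y y' : ℝ) :
    (kernelExponent h z y y').re ≤ 0 := by
  have hz' := re_inv_pos hz
  rw [kernelExponent_eq, Complex.neg_re, Complex.add_re, Complex.re_ofReal_mul,
    Complex.re_ofReal_mul, neg_nonpos]
  positivity

lemma hasDerivAt_cexp_kernelExponent (h : ℝ) (z : ℂ) (y y' : ℝ) :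
    HasDerivAt (fun x ↦ cexp (kernelExponent h z x y'))
      ((exponentDiag h z * y + exponentCross h z * y') * cexp (kernelExponent h z y y')) y := by
  have hx : HasDerivAt (fun x : ℝ ↦ (x : ℂ)) 1 y := Complex.ofRealCLM.hasDerivAt
  have hdiag := (((hx.fun_pow 2).add_const ((y' : ℂ) ^ 2)).const_mul (exponentDiag h z)).div_const 2
  have hcross := (hx.const_mul (exponentCross h z)).mul_const (y' : ℂ)
  refine (hdiag.add hcross).cexp.congr_deriv ?_
  simp only [kernelExponent, Pi.add_apply]
  push_cast
  ring

lemma gaussKernel_eq_cexp (h : ℝ) (hz : 0 < z.re) (y y' : ℝ) :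
    gaussKernel h z y y' =
      1 / (2 * π * h) * (π / z) ^ (1 / 2 : ℂ) * cexp (kernelExponent h z y y') := by
  have hintegrand (η : ℝ) :
      cexp (I * (((y - y') * η / h : ℝ) : ℂ)) * cexp (-z * ((((y + y') / 2) ^ 2 + η ^ 2 : ℝ) : ℂ)) =
        cexp (-z * ((y + y') / 2) ^ 2) *
          (cexp (I * ((y - y') / h) * η) * cexp (-z * η ^ 2)) := by
    simp only [← Complex.exp_add]
    congr 1
    push_cast
    ring
  have hexponent : kernelExponent h z y y' =
      -z * ((y + y') / 2) ^ 2 + -((y - y') / h) ^ 2 / (4 * z) := by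
    rw [kernelExponent_eq]
    push_cast
    ring
  simp_rw [gaussKernel, hintegrand, integral_const_mul, fourierIntegral_gaussian hz, hexponent,
    Complex.exp_add]
  push_cast
  ring

lemma gaussKernel_comm (h : ℝ) (hz : 0 < z.re) (y y' : ℝ) :
    gaussKernel h z y y' = gaussKernel h z y' y := by
  rw [gaussKernel_eq_cexp h hz, gaussKernel_eq_cexp h hz, kernelExponent, kernelExponent]
  ring_nf

lemma norm_gaussKernel_le (h : ℝ) (hz : 0 < z.re) (y y' : ℝ) :
    ‖gaussKernel h z y y'‖ ≤ ‖1 / (2 * π * h) * (π / z) ^ (1 / 2 : ℂ)‖ := by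
  rw [gaussKernel_eq_cexp h hz, norm_mul, Complex.norm_exp]
  exact mul_le_of_le_one_right (norm_nonneg _)
    (Real.exp_le_one_iff.2 (re_kernelExponent_nonpos h hz y y'))

lemma hasDerivAt_gaussKernel_left (h : ℝ) (hz : 0 < z.re) (y y' : ℝ) :
    HasDerivAt (fun x ↦ gaussKernel h z x y')
      ((exponentDiag h z * y + exponentCross h z * y') * gaussKernel h z y y') y := by
  simp only [gaussKernel_eq_cexp h hz]
  exact ((hasDerivAt_cexp_kernelExponent h z y y').const_mul _).congr_deriv (by ring)

lemma hasDerivAt_gaussKernel_right (h : ℝ) (hz : 0 < z.re) (y y' : ℝ) :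
    HasDerivAt (gaussKernel h z y)
      ((exponentDiag h z * y' + exponentCross h z * y) * gaussKernel h z y y') y' := by
  rw [gaussKernel_comm h hz, funext (gaussKernel_comm h hz y)]
  exact hasDerivAt_gaussKernel_left h hz y' y

lemma continuous_gaussKernel (h : ℝ) (hz : 0 < z.re) (y : ℝ) : Continuous (gaussKernel h z y) :=
  continuous_iff_continuousAt.2 fun y' ↦ (hasDerivAt_gaussKernel_right h hz y y').continuousAt

lemma integrable_gaussKernel_mul (h : ℝ) (hz : 0 < z.re) {f : ℝ → ℂ} (hf : Integrable f) (y : ℝ) :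
    Integrable fun y' ↦ gaussKernel h z y y' * f y' :=
  hf.bdd_mul (continuous_gaussKernel h hz y).aestronglyMeasurable
    (.of_forall (norm_gaussKernel_le h hz y))

end Kernel

section Operator

variable {h : ℝ} {z : ℂ} {f : ℝ → ℂ}

/-- The operator `T_z`, the semiclassical Weyl quantization of `e^{-z(y² + η²)}`, as an integral
operator on functions `ℝ → ℂ`. It takes the junk value `0` where the integral diverges. -/
def gaussOp (h : ℝ) (z : ℂ) (f : ℝ → ℂ) (y : ℝ) : ℂ :=
  ∫ y', gaussKernel h z y y' * f y'

lemma gaussOp_const_mul (h : ℝ) (z c : ℂ) (f : ℝ → ℂ) (y : ℝ) :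
    gaussOp h z (fun x ↦ c * f x) y = c * gaussOp h z f y := by
  simp only [gaussOp, mul_left_comm _ c, integral_const_mul]

lemma integrable_affine_mul_gaussKernel_mul (h : ℝ) (hz : 0 < z.re) (hf : Integrable f)
    (hxf : Integrable fun x : ℝ ↦ x * f x) (a b : ℂ) (y : ℝ) :
    Integrable fun y' : ℝ ↦ (a + b * y') * gaussKernel h z y y' * f y' := by
  have hsum := ((integrable_gaussKernel_mul h hz hf y).const_mul a).add
    ((integrable_gaussKernel_mul h hz hxf y).const_mul b)
  refine hsum.congr (.of_forall fun y' ↦ ?_)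
  simp only [Pi.add_apply]
  ring

lemma integral_affine_mul_gaussKernel_mul (h : ℝ) (hz : 0 < z.re) (hf : Integrable f)
    (hxf : Integrable fun x : ℝ ↦ x * f x) (a b : ℂ) (y : ℝ) :
    ∫ y' : ℝ, (a + b * y') * gaussKernel h z y y' * f y' =
      a * gaussOp h z f y + b * gaussOp h z (fun x ↦ x * f x) y := by
  simp only [gaussOp, ← integral_const_mul]
  rw [← integral_add ((integrable_gaussKernel_mul h hz hf y).const_mul a)
    ((integrable_gaussKernel_mul h hz hxf y).const_mul b)]
  congr with y'
  ring

lemma hasDerivAt_gaussOp (h : ℝ) (hz : 0 < z.re) (hf : Integrable f)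
    (hxf : Integrable fun x : ℝ ↦ x * f x) (y : ℝ) :
    HasDerivAt (gaussOp h z f)
      (exponentDiag h z * y * gaussOp h z f y +
        exponentCross h z * gaussOp h z (fun x ↦ x * f x) y) y := by
  set C := ‖1 / (2 * π * h) * (π / z) ^ (1 / 2 : ℂ)‖
  set α := exponentDiag h z
  set β := exponentCross h z
  have hbound (y' x : ℝ) (hx : x ∈ Metric.ball y 1) :
      ‖(α * x + β * y') * gaussKernel h z x y' * f y'‖ ≤
        C * (‖α‖ * (|y| + 1) * ‖f y'‖ + ‖β‖ * ‖y' * f y'‖) := by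
    have hxy : |x| ≤ |y| + 1 := by
      linarith [abs_sub_abs_le_abs_sub x y, (Real.dist_eq x y).symm.trans_lt hx]
    have haffine : ‖α * x + β * y'‖ ≤ ‖α‖ * (|y| + 1) + ‖β‖ * |y'| := by
      refine (norm_add_le _ _).trans ?_
      simp only [norm_mul, Complex.norm_real, Real.norm_eq_abs]
      gcongr
    calc ‖(α * x + β * y') * gaussKernel h z x y' * f y'‖
        = ‖α * x + β * y'‖ * ‖gaussKernel h z x y'‖ * ‖f y'‖ := by rw [norm_mul, norm_mul]
      _ ≤ (‖α‖ * (|y| + 1) + ‖β‖ * |y'|) * C * ‖f y'‖ := by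
          gcongr
          exact norm_gaussKernel_le h hz x y'
      _ = C * (‖α‖ * (|y| + 1) * ‖f y'‖ + ‖β‖ * ‖y' * f y'‖) := by
          rw [norm_mul (y' : ℂ), Complex.norm_real, Real.norm_eq_abs]
          ring
  rw [← integral_affine_mul_gaussKernel_mul h hz hf hxf]
  exact (hasDerivAt_integral_of_dominated_loc_of_deriv_le (Metric.ball_mem_nhds y one_pos)
    (.of_forall fun x ↦ (integrable_gaussKernel_mul h hz hf x).aestronglyMeasurable)
    (integrable_gaussKernel_mul h hz hf y)
    (integrable_affine_mul_gaussKernel_mul h hz hf hxf _ _ y).aestronglyMeasurable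
    (.of_forall hbound) (((hf.norm.const_mul _).add (hxf.norm.const_mul _)).const_mul _)
    (.of_forall fun y' x _ ↦ (hasDerivAt_gaussKernel_left h hz x y').mul_const (f y'))).2

lemma gaussOp_deriv (h : ℝ) (hz : 0 < z.re) (hd : Differentiable ℝ f) (hf : Integrable f)
    (hxf : Integrable fun x : ℝ ↦ x * f x) (hf' : Integrable (deriv f)) (y : ℝ) :
    gaussOp h z (deriv f) y =
      -(exponentCross h z * y * gaussOp h z f y +
        exponentDiag h z * gaussOp h z (fun x ↦ x * f x) y) := by
  rw [← integral_affine_mul_gaussKernel_mul h hz hf hxf]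
  simp only [add_comm (exponentCross h z * _)]
  refine integral_mul_deriv_eq_deriv_mul_of_integrable
    (fun y' _ ↦ hasDerivAt_gaussKernel_right h hz y y') (fun y' _ ↦ (hd y').hasDerivAt)
    (integrable_gaussKernel_mul h hz hf' y) ?_ (integrable_gaussKernel_mul h hz hf y)
  simpa only [add_comm (exponentCross h z * _)] using!
    integrable_affine_mul_gaussKernel_mul h hz hf hxf (exponentCross h z * y) (exponentDiag h z) y

lemma gaussOp_raising (hh : h ≠ 0) (hz : 0 < z.re) (hd : Differentiable ℝ f) (hf : Integrable f)
    (hxf : Integrable fun x : ℝ ↦ x * f x) (hf' : Integrable (deriv f)) (y : ℝ) :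
    (1 + h * z) * gaussOp h z (raising h f) y =
      (1 - h * z) * raising h (gaussOp h z f) y := by
  have hz0 := Complex.ne_zero_of_re_pos hz
  have hh0 : (h : ℂ) ≠ 0 := Complex.ofReal_ne_zero.2 hh
  have hsplit : gaussOp h z (raising h f) y =
      h * gaussOp h z (deriv f) y - gaussOp h z (fun x ↦ x * f x) y := by
    simp only [gaussOp, raising, ← integral_const_mul]
    rw [← integral_sub ((integrable_gaussKernel_mul h hz hf' y).const_mul _)
      (integrable_gaussKernel_mul h hz hxf y)]
    congr with y'
    ring
  rw [hsplit, gaussOp_deriv h hz hd hf hxf hf', raising, (hasDerivAt_gaussOp h hz hf hxf y).deriv,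
    exponentDiag, exponentCross]
  field_simp
  ring

lemma re_one_add_sq_div_pos (hh : 0 < h) (hz : 0 < z.re) :
    0 < ((1 + h * z) ^ 2 / (4 * z * h ^ 2)).re := by
  have hz0 := Complex.ne_zero_of_re_pos hz
  have hh0 : (h : ℂ) ≠ 0 := Complex.ofReal_ne_zero.2 hh.ne'
  have hsplit : (1 + h * z) ^ 2 / (4 * z * h ^ 2) =
      (1 / 4 : ℝ) * z + (1 / (4 * h ^ 2) : ℝ) * z⁻¹ + (1 / (2 * h) : ℝ) := by
    push_cast
    field_simp
    ring
  have hzinv := re_inv_pos hz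
  rw [hsplit, Complex.add_re, Complex.add_re, Complex.re_ofReal_mul, Complex.re_ofReal_mul,
    Complex.ofReal_re]
  positivity

lemma gaussian_roots_mul (hh : 0 < h) (hz : 0 < z.re) :
    (π / z) ^ (1 / 2 : ℂ) * (π / ((1 + h * z) ^ 2 / (4 * z * h ^ 2))) ^ (1 / 2 : ℂ) =
      2 * π * h / (1 + h * z) := by
  have hz0 := Complex.ne_zero_of_re_pos hz
  have hhz : 0 < (1 + h * z).re := re_one_add_pos (re_ofReal_mul_pos hh hz)
  refine mul_cpow_half_eq ?_ ?_ ?_ (by field_simp; ring)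
  · exact re_ofReal_mul_pos Real.pi_pos (re_inv_pos hz)
  · exact re_ofReal_mul_pos Real.pi_pos (re_inv_pos (re_one_add_sq_div_pos hh hz))
  · simpa [div_eq_mul_inv] using
      re_ofReal_mul_pos (mul_pos Real.two_pi_pos hh) (re_inv_pos hhz)

lemma gaussKernel_mul_gaussian (hh : h ≠ 0) (hz : 0 < z.re) (y x : ℝ) :
    gaussKernel h z y x * (Real.exp (-(2 * h)⁻¹ * x ^ 2) : ℂ) =
      1 / (2 * π * h) * (π / z) ^ (1 / 2 : ℂ) *
        cexp (-((1 + h * z) ^ 2 / (4 * z * h ^ 2)) * x ^ 2 + exponentCross h z * y * x +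
          exponentDiag h z * y ^ 2 / 2) := by
  have hz0 := Complex.ne_zero_of_re_pos hz
  have hh0 : (h : ℂ) ≠ 0 := Complex.ofReal_ne_zero.2 hh
  rw [gaussKernel_eq_cexp h hz, Complex.ofReal_exp, mul_assoc, ← Complex.exp_add, kernelExponent,
    exponentDiag]
  congr 2
  push_cast
  field_simp
  ring

lemma gaussOp_gaussian (hh : 0 < h) (hz : 0 < z.re) (y : ℝ) :
    gaussOp h z (fun x ↦ (Real.exp (-(2 * h)⁻¹ * x ^ 2) : ℂ)) y =
      1 / (1 + h * z) * (Real.exp (-(2 * h)⁻¹ * y ^ 2) : ℂ) := by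
  have hz0 := Complex.ne_zero_of_re_pos hz
  have hh0 : (h : ℂ) ≠ 0 := Complex.ofReal_ne_zero.2 hh.ne'
  have hb_re : (-((1 + h * z) ^ 2 / (4 * z * h ^ 2))).re < 0 := by
    rw [Complex.neg_re, neg_lt_zero]
    exact re_one_add_sq_div_pos hh hz
  have hexponent :
      exponentDiag h z * y ^ 2 / 2 -
          (exponentCross h z * y) ^ 2 / (4 * -((1 + h * z) ^ 2 / (4 * z * h ^ 2))) =
        ((-(2 * h)⁻¹ * y ^ 2 : ℝ) : ℂ) := by
    have hsq : (exponentCross h z * y) ^ 2 = 4 * -((1 + h * z) ^ 2 / (4 * z * h ^ 2)) *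
        -((1 - h * z) ^ 2 / (4 * z * h ^ 2) * y ^ 2) := by
      rw [exponentCross]
      field_simp
      ring
    have hb : (4 : ℂ) * -((1 + h * z) ^ 2 / (4 * z * h ^ 2)) ≠ 0 :=
      mul_ne_zero (by norm_num) fun hb ↦ by simp [hb] at hb_re
    rw [hsq, mul_div_cancel_left₀ _ hb, exponentDiag]
    push_cast
    field_simp
    ring
  simp only [gaussOp, gaussKernel_mul_gaussian hh.ne' hz, integral_const_mul]
  rw [integral_cexp_quadratic hb_re, hexponent, neg_neg, ← Complex.ofReal_exp, ← mul_assoc,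
    mul_assoc (1 / (2 * π * h : ℂ)), gaussian_roots_mul hh hz]
  field_simp

end Operator

lemma gaussOp_scaledHermite_zero {h : ℝ} {z : ℂ} (hh : 0 < h) (hz : 0 < z.re) (y : ℝ) :
    gaussOp h z (fun x ↦ (scaledHermite h 0 x : ℂ)) y =
      1 / (1 + h * z) * scaledHermite h 0 y := by
  simp only [scaledHermite_zero hh, Complex.ofReal_mul _ (Real.exp _), gaussOp_const_mul,
    gaussOp_gaussian hh hz]
  ring

lemma gaussOp_raising_scaledHermite {h : ℝ} {z : ℂ} (hh : 0 < h) (hz : 0 < z.re) (k : ℕ) (y : ℝ) :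
    (1 + h * z) * gaussOp h z (raising h fun x ↦ (scaledHermite h k x : ℂ)) y =
      (1 - h * z) * raising h (gaussOp h z fun x ↦ (scaledHermite h k x : ℂ)) y := by
  have hφ := isPolyGaussian_scaledHermite hh k
  have hb : 0 < (2 * h)⁻¹ := by positivity
  have hderiv (x : ℝ) : HasDerivAt (fun x ↦ (scaledHermite h k x : ℂ))
      (deriv (scaledHermite h k) x : ℝ) x := (hφ.differentiable x).hasDerivAt.ofReal_comp
  refine gaussOp_raising hh.ne' hz (fun x ↦ (hderiv x).differentiableAt)
    (hφ.integrable hb).ofReal ?_ ?_ y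
  · simp only [← Complex.ofReal_mul]
    exact (hφ.id_mul.integrable hb).ofReal
  · rw [funext fun x ↦ (hderiv x).deriv]
    exact (hφ.deriv.integrable hb).ofReal

lemma gaussOp_scaledHermite_succ {h : ℝ} {z c : ℂ} (hh : 0 < h) (hz : 0 < z.re) {k : ℕ}
    (hk : ∀ y, gaussOp h z (fun x ↦ (scaledHermite h k x : ℂ)) y = c * scaledHermite h k y)
    (y : ℝ) :
    gaussOp h z (fun x ↦ (scaledHermite h (k + 1) x : ℂ)) y =
      (1 - h * z) / (1 + h * z) * c * scaledHermite h (k + 1) y := by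
  have hhz := Complex.ne_zero_of_re_pos (re_one_add_pos (re_ofReal_mul_pos hh hz))
  have hr : (√(2 * (k + 1) * h) : ℂ) ≠ 0 := Complex.ofReal_ne_zero.2 (by positivity)
  have hintertwine := gaussOp_raising_scaledHermite hh hz k y
  simp only [funext hk, raising_const_mul, funext (raising_scaledHermite hh k),
    gaussOp_const_mul] at hintertwine
  refine mul_left_cancel₀ (mul_ne_zero hhz hr) ?_
  rw [mul_assoc, hintertwine]
  field_simp

theorem mehler_eigenfunction
    (h : ℝ) (hh : 0 < h) (z : ℂ) (hz : 0 < z.re) (k : ℕ) (y : ℝ) :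
    ∫ y' : ℝ, gaussKernel h z y y' * ((scaledHermite h k y' : ℝ) : ℂ)
      = ((1 - (h : ℂ) * z) ^ k / (1 + (h : ℂ) * z) ^ (k + 1)) *
          ((scaledHermite h k y : ℝ) : ℂ) := by
  change gaussOp h z (fun x ↦ (scaledHermite h k x : ℂ)) y = _
  induction k generalizing y with
  | zero => rw [gaussOp_scaledHermite_zero hh hz, pow_zero, zero_add, pow_one]
  | succ k ih =>
    rw [gaussOp_scaledHermite_succ hh hz ih, div_mul_div_comm, ← pow_succ', ← pow_succ']
end
end

section
/- Let h > 0 and c > 0. Let T_c be the integral operator on L²(ℝ) with kernel (1/(2πh)) ∫_ℝ e^{i(y−y′)η/h} e^{−c(m² + η²)} dη, where m = (y+y′)/2, and let S_c be the integral operator with kernel (1/(2πh)) ∫_ℝ e^{i(y−y′)η/h} (m² + η²) e^{−c(m² + η²)} dη. Then for every Schwartz function u : ℝ → ℂ and every y ∈ ℝ, −h² (T_c u)″(y) + y² (T_c u)(y) = (1 − h²c²)(S_c u)(y) + h² c (T_c u)(y). -/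
/-!
STATEMENT 11: For h, c > 0, let T_c and S_c be the integral operators with
Gaussian kernels (the semiclassical Weyl quantizations of e^{−cq} and
q e^{−cq}, q = y² + η²).  Then for every Schwartz u and every y ∈ ℝ,
−h²(T_c u)″(y) + y²(T_c u)(y) = (1−h²c²)(S_c u)(y) + h²c (T_c u)(y).
-/

open MeasureTheory Complex Real

noncomputable section

/-- Kernel of the semiclassical Weyl quantization of `e^{−c(y²+η²)}`. -/
def gaussKernelT (h c : ℝ) (y y' : ℝ) : ℂ :=
  ((1 / (2 * Real.pi * h) : ℝ) : ℂ) *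
    ∫ η : ℝ, Complex.exp (Complex.I * (((y - y') * η / h : ℝ) : ℂ)) *
      ((Real.exp (-c * (((y + y') / 2) ^ 2 + η ^ 2)) : ℝ) : ℂ)

/-- Kernel of the semiclassical Weyl quantization of `(y²+η²) e^{−c(y²+η²)}`. -/
def gaussKernelS (h c : ℝ) (y y' : ℝ) : ℂ :=
  ((1 / (2 * Real.pi * h) : ℝ) : ℂ) *
    ∫ η : ℝ, Complex.exp (Complex.I * (((y - y') * η / h : ℝ) : ℂ)) *
      (((((y + y') / 2) ^ 2 + η ^ 2) * Real.exp (-c * (((y + y') / 2) ^ 2 + η ^ 2)) : ℝ) : ℂ)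

/-- The operator `T_c` applied to a function. -/
def applyT (h c : ℝ) (u : ℝ → ℂ) : ℝ → ℂ :=
  fun y => ∫ y' : ℝ, gaussKernelT h c y y' * u y'

/-- The operator `S_c` applied to a function. -/
def applyS (h c : ℝ) (u : ℝ → ℂ) : ℝ → ℂ :=
  fun y => ∫ y' : ℝ, gaussKernelS h c y y' * u y'

/-!
The kernel of `T_c` is the Gaussian `C exp (-a y² + β x y - a x²)`, so up to the factor
`exp (-a y²)` the function `T_c u` is a bilateral Laplace transform evaluated at `β y`.
Differentiating under the integral gives `(T_c u)' = T_c (β x u) - 2 a y T_c u`. The same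
differentiation rule yields the second moment of a Gaussian, by which the kernel of `S_c` is
`m² + 1/(2c) - (y - x)²/(4c²h²)` times that of `T_c`, where `m = (x + y)/2`. What remains is a
polynomial identity in `x` and `y`.
-/

section Laplace

variable {α : Type*} [MeasurableSpace α] {μ : Measure α} {φ : α → ℝ} {f : α → ℂ}

lemma abs_mul_exp_le_exp_add_exp {s t : ℝ} (hst : |t - s| ≤ 1) (x : ℝ) :
    |x| * rexp (t * x) ≤ rexp ((s + 2) * x) + rexp ((s - 2) * x) := by
  have abs_le_exp : |x| ≤ rexp |x| := by linarith [add_one_le_exp |x|]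
  have exponent_le : t * x ≤ s * x + |x| := by
    have := (le_abs_self ((t - s) * x)).trans
      ((abs_mul _ _).trans_le (mul_le_of_le_one_left (abs_nonneg x) hst))
    linarith
  calc |x| * rexp (t * x) ≤ rexp |x| * rexp (s * x + |x|) := by gcongr
    _ = rexp (s * x) * rexp |2 * x| := by
      rw [← Real.exp_add, ← Real.exp_add, abs_mul, abs_two]; ring_nf
    _ ≤ rexp (s * x) * (rexp (2 * x) + rexp (-(2 * x))) := by gcongr; exact exp_abs_le _
    _ = rexp ((s + 2) * x) + rexp ((s - 2) * x) := by
      rw [mul_add, ← Real.exp_add, ← Real.exp_add]; ring_nf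

lemma norm_cexp_mul_ofReal (z : ℂ) (x : ℝ) : ‖cexp (z * x)‖ = rexp (z.re * x) := by
  rw [Complex.norm_exp, re_mul_ofReal]

lemma integrable_cexp_mul (hφ : AEStronglyMeasurable φ μ)
    (hf : ∀ s : ℝ, Integrable (fun x => cexp (s * φ x) * f x) μ) (z : ℂ) :
    Integrable (fun x => cexp (z * φ x) * f x) μ := by
  have f_meas : AEStronglyMeasurable f μ := by simpa using (hf 0).aestronglyMeasurable
  refine (hf z.re).mono (by fun_prop) (.of_forall fun x => ?_)
  simp only [norm_mul, norm_cexp_mul_ofReal, ofReal_re, le_refl]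

theorem integrable_and_hasDerivAt_integral_cexp_mul (hφ : AEStronglyMeasurable φ μ)
    (hf : ∀ s : ℝ, Integrable (fun x => cexp (s * φ x) * f x) μ) (z : ℂ) :
    Integrable (fun x => cexp (z * φ x) * (φ x * f x)) μ ∧
      HasDerivAt (fun w : ℂ => ∫ x, cexp (w * φ x) * f x ∂μ)
        (∫ x, cexp (z * φ x) * (φ x * f x) ∂μ) z := by
  have f_meas : AEStronglyMeasurable f μ := by simpa using (hf 0).aestronglyMeasurable
  have bound_integrable : Integrable
      (fun x => ‖cexp ((z.re + 2 : ℝ) * φ x) * f x‖ + ‖cexp ((z.re - 2 : ℝ) * φ x) * f x‖) μ :=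
    (hf _).norm.add (hf _).norm
  refine hasDerivAt_integral_of_dominated_loc_of_deriv_le (Metric.ball_mem_nhds z one_pos)
    (.of_forall fun w => (integrable_cexp_mul hφ hf w).aestronglyMeasurable)
    (integrable_cexp_mul hφ hf z)
    (F' := fun w x => cexp (w * φ x) * (φ x * f x)) (by fun_prop)
    (.of_forall fun x w hw => ?_) bound_integrable (.of_forall fun x w _ => ?_)
  · have re_close : |w.re - z.re| ≤ 1 := by
      simpa using (abs_re_le_norm (w - z)).trans (mem_ball_iff_norm.mp hw).le
    simp only [norm_mul, norm_cexp_mul_ofReal, ofReal_re, norm_real, Real.norm_eq_abs]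
    rw [← add_mul, ← mul_assoc, mul_comm (rexp _)]
    gcongr
    exact abs_mul_exp_le_exp_add_exp re_close (φ x)
  · convert! ((hasDerivAt_mul_const (φ x : ℂ)).cexp.mul_const (f x)) using 1
    ring

end Laplace

section GaussianMoments

variable {b : ℂ}

lemma integrable_cexp_mul_cexp_neg_mul_sq (hb : 0 < b.re) (z : ℂ) :
    Integrable fun η : ℝ => cexp (z * η) * cexp (-b * η ^ 2) := by
  simpa [← Complex.exp_add, add_comm] using integrable_cexp_quadratic hb z 0

lemma integral_cexp_mul_cexp_neg_mul_sq (hb : 0 < b.re) (z : ℂ) :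
    ∫ η : ℝ, cexp (z * η) * cexp (-b * η ^ 2) =
      (π / b) ^ (1 / 2 : ℂ) * cexp (z ^ 2 / (4 * b)) := by
  have I_mul_neg_I_mul : I * (-I * z) = z := by linear_combination (-z) * I_sq
  have neg_sq_neg_I_mul : -(-I * z) ^ 2 = z ^ 2 := by linear_combination (-z ^ 2) * I_sq
  simpa only [I_mul_neg_I_mul, neg_sq_neg_I_mul] using fourierIntegral_gaussian hb (-I * z)

lemma integrable_cexp_mul_id_mul_cexp_neg_mul_sq (hb : 0 < b.re) (z : ℂ) :
    Integrable fun η : ℝ => cexp (z * η) * (η * cexp (-b * η ^ 2)) :=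
  (integrable_and_hasDerivAt_integral_cexp_mul aestronglyMeasurable_id
    (fun s => integrable_cexp_mul_cexp_neg_mul_sq hb s) z).1

lemma hasDerivAt_integral_cexp_mul_cexp_neg_mul_sq (hb : 0 < b.re) (z : ℂ) :
    HasDerivAt (fun w : ℂ => ∫ η : ℝ, cexp (w * η) * cexp (-b * η ^ 2))
      (z / (2 * b) * ∫ η : ℝ, cexp (z * η) * cexp (-b * η ^ 2)) z := by
  simp only [integral_cexp_mul_cexp_neg_mul_sq hb]
  refine (((hasDerivAt_pow 2 z).div_const (4 * b)).cexp.const_mul _).congr_deriv ?_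
  push_cast
  ring

lemma integral_cexp_mul_id_mul_cexp_neg_mul_sq (hb : 0 < b.re) (z : ℂ) :
    ∫ η : ℝ, cexp (z * η) * (η * cexp (-b * η ^ 2)) =
      z / (2 * b) * ∫ η : ℝ, cexp (z * η) * cexp (-b * η ^ 2) :=
  (integrable_and_hasDerivAt_integral_cexp_mul aestronglyMeasurable_id
    (fun s => integrable_cexp_mul_cexp_neg_mul_sq hb s) z).2.unique
    (hasDerivAt_integral_cexp_mul_cexp_neg_mul_sq hb z)

lemma integrable_cexp_mul_sq_mul_cexp_neg_mul_sq (hb : 0 < b.re) (z : ℂ) :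
    Integrable fun η : ℝ => cexp (z * η) * (η ^ 2 * cexp (-b * η ^ 2)) := by
  simpa only [id, pow_two, mul_assoc] using
    (integrable_and_hasDerivAt_integral_cexp_mul aestronglyMeasurable_id
      (fun s => integrable_cexp_mul_id_mul_cexp_neg_mul_sq hb s) z).1

lemma integral_cexp_mul_sq_mul_cexp_neg_mul_sq (hb : 0 < b.re) (z : ℂ) :
    ∫ η : ℝ, cexp (z * η) * (η ^ 2 * cexp (-b * η ^ 2)) =
      (1 / (2 * b) + z ^ 2 / (4 * b ^ 2)) * ∫ η : ℝ, cexp (z * η) * cexp (-b * η ^ 2) := by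
  have second_moment := (integrable_and_hasDerivAt_integral_cexp_mul aestronglyMeasurable_id
    (fun s => integrable_cexp_mul_id_mul_cexp_neg_mul_sq hb s) z).2
  simp only [id, integral_cexp_mul_id_mul_cexp_neg_mul_sq hb] at second_moment
  have explicit := ((hasDerivAt_id z).div_const (2 * b)).mul
    (hasDerivAt_integral_cexp_mul_cexp_neg_mul_sq hb z)
  simp only [pow_two (_ : ℂ), mul_assoc] at second_moment explicit ⊢
  rw [second_moment.unique explicit]
  simp only [id]
  ring

end GaussianMoments

section Kernels

variable {h c : ℝ}

lemma weyl_integrand_eq_mul_cexp (h c y x η : ℝ) :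
    cexp (I * (((y - x) * η / h : ℝ) : ℂ)) *
        ((rexp (-c * (((y + x) / 2) ^ 2 + η ^ 2)) : ℝ) : ℂ) =
      (rexp (-c * ((y + x) / 2) ^ 2) : ℂ) *
        (cexp (I * ((y - x) / h : ℝ) * η) * cexp (-c * η ^ 2)) := by
  simp only [ofReal_exp, ← Complex.exp_add]
  push_cast
  ring_nf

theorem gaussKernelT_eq_mul_exp (h : ℝ) (hc : 0 < c) (y x : ℝ) :
    gaussKernelT h c y x = ((1 / (2 * π * h) : ℝ) : ℂ) * (π / c : ℂ) ^ (1 / 2 : ℂ) *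
      (rexp (-(c * ((y + x) / 2) ^ 2 + (y - x) ^ 2 / (4 * c * h ^ 2))) : ℂ) := by
  have exponents :
      (rexp (-c * ((y + x) / 2) ^ 2) : ℂ) * cexp ((I * ((y - x) / h : ℝ)) ^ 2 / (4 * c)) =
        (rexp (-(c * ((y + x) / 2) ^ 2 + (y - x) ^ 2 / (4 * c * h ^ 2))) : ℂ) := by
    simp only [ofReal_exp, ← Complex.exp_add, mul_pow, I_sq]
    push_cast
    ring_nf
  simp only [gaussKernelT, weyl_integrand_eq_mul_cexp]
  rw [integral_const_mul, integral_cexp_mul_cexp_neg_mul_sq (by simpa using hc), ← exponents]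
  ring

theorem gaussKernelS_eq_mul_gaussKernelT (h : ℝ) (hc : 0 < c) (y x : ℝ) :
    gaussKernelS h c y x =
      ((((y + x) / 2) ^ 2 + 1 / (2 * c) - ((y - x) / h) ^ 2 / (4 * c ^ 2) : ℝ) : ℂ) *
        gaussKernelT h c y x := by
  have hc' : 0 < (c : ℂ).re := by simpa using hc
  set z : ℂ := I * ((y - x) / h : ℝ) with z_def
  have z_sq : z ^ 2 = -(((y - x) / h : ℝ) : ℂ) ^ 2 := by simp [z, mul_pow]
  have integrand_eq (η : ℝ) : cexp (I * (((y - x) * η / h : ℝ) : ℂ)) *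
      (((((y + x) / 2) ^ 2 + η ^ 2) * rexp (-c * (((y + x) / 2) ^ 2 + η ^ 2)) : ℝ) : ℂ) =
      (rexp (-c * ((y + x) / 2) ^ 2) : ℂ) *
        ((((y + x) / 2 : ℝ) : ℂ) ^ 2 * (cexp (z * η) * cexp (-c * η ^ 2)) +
          cexp (z * η) * (η ^ 2 * cexp (-c * η ^ 2))) := by
    rw [ofReal_mul, mul_left_comm, weyl_integrand_eq_mul_cexp, ← z_def]
    push_cast
    ring
  simp only [gaussKernelS, gaussKernelT, integrand_eq, weyl_integrand_eq_mul_cexp, ← z_def]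
  rw [integral_const_mul, integral_const_mul,
    integral_add ((integrable_cexp_mul_cexp_neg_mul_sq hc' z).const_mul _)
      (integrable_cexp_mul_sq_mul_cexp_neg_mul_sq hc' z),
    integral_const_mul, integral_cexp_mul_sq_mul_cexp_neg_mul_sq hc', z_sq]
  push_cast
  ring

/-- The coefficient `a` in the form `C exp (-a y² + β x y - a x²)` of the kernel of `T_c`. -/
def gaussDecay (h c : ℝ) : ℝ := (c + 1 / (c * h ^ 2)) / 4

/-- The coefficient `β` in the form `C exp (-a y² + β x y - a x²)` of the kernel of `T_c`. -/
def gaussCoupling (h c : ℝ) : ℝ := (1 / (c * h ^ 2) - c) / 2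

lemma gaussKernelT_eq_mul_gaussKernelT_zero (h : ℝ) (hc : 0 < c) (y x : ℝ) :
    gaussKernelT h c y x = cexp (-gaussDecay h c * y ^ 2) *
      (cexp (y * (gaussCoupling h c * x : ℝ)) * gaussKernelT h c 0 x) := by
  have exponents : (rexp (-(c * ((y + x) / 2) ^ 2 + (y - x) ^ 2 / (4 * c * h ^ 2))) : ℂ) =
      cexp (-gaussDecay h c * y ^ 2) * (cexp (y * (gaussCoupling h c * x : ℝ)) *
        (rexp (-(c * ((0 + x) / 2) ^ 2 + (0 - x) ^ 2 / (4 * c * h ^ 2))) : ℂ)) := by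
    simp only [ofReal_exp, ← Complex.exp_add, gaussDecay, gaussCoupling]
    push_cast
    ring_nf
  rw [gaussKernelT_eq_mul_exp h hc, gaussKernelT_eq_mul_exp h hc, exponents]
  ring

theorem integrable_gaussKernelT_mul (h : ℝ) (hc : 0 < c) {u : ℝ → ℂ} (hu : Integrable u) (y : ℝ) :
    Integrable fun x => gaussKernelT h c y x * u x := by
  simp only [gaussKernelT_eq_mul_exp h hc]
  refine hu.bdd_mul
    (c := ‖((1 / (2 * π * h) : ℝ) : ℂ) * (π / c : ℂ) ^ (1 / 2 : ℂ)‖) (by fun_prop)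
    (.of_forall fun x => ?_)
  rw [norm_mul _ (ofReal _), norm_real, Real.norm_of_nonneg (Real.exp_pos _).le]
  exact mul_le_of_le_one_right (norm_nonneg _)
    (Real.exp_le_one_iff.mpr (neg_nonpos.mpr (by positivity)))

theorem gaussKernel_moyal_identity (hh : h ≠ 0) (hc : 0 < c) (y x : ℝ) :
    -(h : ℂ) ^ 2 * (((gaussCoupling h c * x - 2 * gaussDecay h c * y) ^ 2
          - 2 * gaussDecay h c : ℝ) * gaussKernelT h c y x)
        + (y : ℂ) ^ 2 * gaussKernelT h c y x =
      (1 - (h : ℂ) ^ 2 * (c : ℂ) ^ 2) * gaussKernelS h c y x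
        + (h : ℂ) ^ 2 * (c : ℂ) * gaussKernelT h c y x := by
  have symbol_identity : -h ^ 2 * ((gaussCoupling h c * x - 2 * gaussDecay h c * y) ^ 2
        - 2 * gaussDecay h c) + y ^ 2 =
      (1 - h ^ 2 * c ^ 2) *
        (((y + x) / 2) ^ 2 + 1 / (2 * c) - ((y - x) / h) ^ 2 / (4 * c ^ 2)) + h ^ 2 * c := by
    unfold gaussCoupling gaussDecay
    field_simp
    ring
  have complex_identity := congrArg ((↑) : ℝ → ℂ) symbol_identity
  rw [gaussKernelS_eq_mul_gaussKernelT h hc]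
  push_cast at complex_identity ⊢
  linear_combination gaussKernelT h c y x * complex_identity

end Kernels

section Operators

variable {h c : ℝ} {u : ℝ → ℂ}

lemma applyT_eq_mul_integral (h : ℝ) (hc : 0 < c) (u : ℝ → ℂ) (y : ℝ) :
    applyT h c u y = cexp (-gaussDecay h c * y ^ 2) *
      ∫ x : ℝ, cexp (y * (gaussCoupling h c * x : ℝ)) * (gaussKernelT h c 0 x * u x) := by
  simp only [applyT, gaussKernelT_eq_mul_gaussKernelT_zero h hc y, mul_assoc, integral_const_mul]

lemma integrable_gaussKernelT_mul_iff (h : ℝ) (hc : 0 < c) (u : ℝ → ℂ) (y : ℝ) :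
    Integrable (fun x => gaussKernelT h c y x * u x) ↔
      Integrable fun x : ℝ =>
        cexp (y * (gaussCoupling h c * x : ℝ)) * (gaussKernelT h c 0 x * u x) := by
  simp only [gaussKernelT_eq_mul_gaussKernelT_zero h hc y, mul_assoc]
  exact integrable_const_mul_iff (isUnit_iff_ne_zero.mpr (Complex.exp_ne_zero _)) _

lemma integrable_gaussKernelT_mul_coupling_mul (hc : 0 < c)
    (hu : ∀ y, Integrable fun x => gaussKernelT h c y x * u x) (y : ℝ) :
    Integrable fun x => gaussKernelT h c y x * ((gaussCoupling h c * x : ℝ) * u x) := by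
  rw [integrable_gaussKernelT_mul_iff h hc]
  simpa only [mul_left_comm] using (integrable_and_hasDerivAt_integral_cexp_mul (by fun_prop)
    (fun s => (integrable_gaussKernelT_mul_iff h hc u s).mp (hu s)) y).1

theorem hasDerivAt_applyT (hc : 0 < c)
    (hu : ∀ y, Integrable fun x => gaussKernelT h c y x * u x) (y : ℝ) :
    HasDerivAt (applyT h c u)
      (applyT h c (fun x => (gaussCoupling h c * x : ℝ) * u x) y
        - 2 * gaussDecay h c * y * applyT h c u y) y := by
  have gaussian_deriv : HasDerivAt (fun z : ℂ => cexp (-gaussDecay h c * z ^ 2))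
      (cexp (-gaussDecay h c * y ^ 2) * (-gaussDecay h c * (2 * y))) y := by
    simpa using ((hasDerivAt_pow 2 (y : ℂ)).const_mul (-gaussDecay h c : ℂ)).cexp
  have laplace_deriv := (integrable_and_hasDerivAt_integral_cexp_mul (by fun_prop)
    (fun s => (integrable_gaussKernelT_mul_iff h hc u s).mp (hu s)) y).2
  rw [funext (applyT_eq_mul_integral h hc u), applyT_eq_mul_integral h hc]
  refine (gaussian_deriv.mul laplace_deriv).comp_ofReal.congr_deriv ?_
  simp only [mul_left_comm (gaussKernelT h c 0 _)]
  ring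

theorem deriv_deriv_applyT (hc : 0 < c)
    (hu : ∀ y, Integrable fun x => gaussKernelT h c y x * u x) (y : ℝ) :
    deriv (deriv (applyT h c u)) y =
      applyT h c (fun x => (gaussCoupling h c * x : ℝ) * ((gaussCoupling h c * x : ℝ) * u x)) y
        - 4 * gaussDecay h c * y * applyT h c (fun x => (gaussCoupling h c * x : ℝ) * u x) y
        + (4 * gaussDecay h c ^ 2 * y ^ 2 - 2 * gaussDecay h c) * applyT h c u y := by
  have hxu := integrable_gaussKernelT_mul_coupling_mul hc hu
  have linear_deriv : HasDerivAt (fun t : ℝ => 2 * gaussDecay h c * (t : ℂ))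
      (2 * gaussDecay h c) y := by
    simpa using ofRealCLM.hasDerivAt.const_mul (2 * gaussDecay h c : ℂ)
  rw [funext fun t => (hasDerivAt_applyT hc hu t).deriv]
  refine ((hasDerivAt_applyT hc hxu y).sub
    (linear_deriv.mul (hasDerivAt_applyT hc hu y))).deriv.trans ?_
  ring

theorem integrable_and_deriv_deriv_applyT_eq_integral (hc : 0 < c)
    (hu : ∀ y, Integrable fun x => gaussKernelT h c y x * u x) (y : ℝ) :
    Integrable (fun x => ((gaussCoupling h c * x - 2 * gaussDecay h c * y) ^ 2
        - 2 * gaussDecay h c : ℝ) * gaussKernelT h c y x * u x) ∧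
      deriv (deriv (applyT h c u)) y =
        ∫ x : ℝ, ((gaussCoupling h c * x - 2 * gaussDecay h c * y) ^ 2
          - 2 * gaussDecay h c : ℝ) * gaussKernelT h c y x * u x := by
  have hxu := integrable_gaussKernelT_mul_coupling_mul hc hu
  have quadratic_integrable := integrable_gaussKernelT_mul_coupling_mul hc hxu y
  have linear_integrable := (hxu y).const_mul (4 * gaussDecay h c * y : ℂ)
  have constant_integrable :=
    (hu y).const_mul (4 * gaussDecay h c ^ 2 * y ^ 2 - 2 * gaussDecay h c : ℂ)
  have integrand_eq (x : ℝ) : (((gaussCoupling h c * x - 2 * gaussDecay h c * y) ^ 2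
        - 2 * gaussDecay h c : ℝ) : ℂ) * gaussKernelT h c y x * u x =
      gaussKernelT h c y x * ((gaussCoupling h c * x : ℝ) * ((gaussCoupling h c * x : ℝ) * u x))
        - 4 * gaussDecay h c * y * (gaussKernelT h c y x * ((gaussCoupling h c * x : ℝ) * u x))
        + (4 * gaussDecay h c ^ 2 * y ^ 2 - 2 * gaussDecay h c)
          * (gaussKernelT h c y x * u x) := by
    push_cast
    ring
  simp only [integrand_eq]
  refine ⟨(quadratic_integrable.sub linear_integrable).add constant_integrable, ?_⟩
  refine (deriv_deriv_applyT hc hu y).trans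
    ((integral_add (quadratic_integrable.sub linear_integrable) constant_integrable).trans ?_).symm
  rw [integral_sub' quadratic_integrable linear_integrable, integral_const_mul, integral_const_mul]
  rfl

/-- For `h c = ±1` the integral defining `S_c u` may diverge; its coefficient then vanishes. -/
theorem gaussian_moyal_harmonic_oscillator_identity_general (hh : h ≠ 0) (hc : 0 < c)
    (hu : ∀ y, Integrable fun x => gaussKernelT h c y x * u x) (y : ℝ) :
    -(h : ℂ) ^ 2 * deriv (deriv (applyT h c u)) y + (y : ℂ) ^ 2 * applyT h c u y =
      (1 - (h : ℂ) ^ 2 * (c : ℂ) ^ 2) * applyS h c u y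
        + (h : ℂ) ^ 2 * (c : ℂ) * applyT h c u y := by
  obtain ⟨deriv_integrable, deriv_eq⟩ := integrable_and_deriv_deriv_applyT_eq_integral hc hu y
  have applyS_eq : (1 - (h : ℂ) ^ 2 * (c : ℂ) ^ 2) * applyS h c u y =
      -(h : ℂ) ^ 2 * deriv (deriv (applyT h c u)) y
        + ((y : ℂ) ^ 2 - (h : ℂ) ^ 2 * c) * applyT h c u y := by
    rw [deriv_eq, applyS, applyT, ← integral_const_mul, ← integral_const_mul,
      ← integral_const_mul, ← integral_add (deriv_integrable.const_mul _) ((hu y).const_mul _)]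
    refine integral_congr_ae (.of_forall fun x => ?_)
    linear_combination (-u x) * gaussKernel_moyal_identity hh hc y x
  rw [applyS_eq]
  ring

end Operators

theorem gaussian_moyal_harmonic_oscillator_identity
    (h c : ℝ) (hh : 0 < h) (hc : 0 < c) (u : SchwartzMap ℝ ℂ) (y : ℝ) :
    -(h : ℂ) ^ 2 * deriv (deriv (applyT h c (⇑u))) y
        + (y : ℂ) ^ 2 * applyT h c (⇑u) y
      = (1 - (h : ℂ) ^ 2 * (c : ℂ) ^ 2) * applyS h c (⇑u) y
          + (h : ℂ) ^ 2 * (c : ℂ) * applyT h c (⇑u) y :=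
  gaussian_moyal_harmonic_oscillator_identity_general hh.ne' hc
    (integrable_gaussKernelT_mul h hc u.integrable) y
end
end

section
/- For all h ∈ (0,1) and all k ∈ ℕ₀ one has (1−h)^k/(1+h)^{k+1} ≤ e^{−2kh}. Moreover, for every γ₀ > 0 there exists a constant C > 0, depending only on γ₀, such that for all h ∈ (0, 1/2] and all k ∈ ℕ₀ with kh ≤ γ₀, |(1−h)^k/(1+h)^{k+1} · e^{(2k+1)h} − 1| ≤ C h². -/
/-!
Write `λ_k(h) e^{(2k+1)h} = a ^ k * b` with `a = (1 - h) / (1 + h) * e^{2h}` and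
`b = e^h / (1 + h)`. Since `log ((1 + h) / (1 - h)) = 2h + O(h³)`, the factor `a` lies between
`1 - 2h³` and `1`, so by Bernoulli's inequality `a ^ k` loses at most `2kh³`, which is `O(h²)` as
long as `kh` is bounded. The factor `b` is responsible for an error of order `h²` whatever `k` is.
-/

open Real

/-- The eigenvalue `λ_k(h)` of the semiclassical Weyl quantization of `e^{-(y² + η²)}`, given
directly by its closed form rather than through the operator. -/
noncomputable def gaussianEigenvalue (h : ℝ) (k : ℕ) : ℝ :=
  (1 - h) ^ k / (1 + h) ^ (k + 1)

section

variable {h : ℝ}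

lemma one_sub_div_one_add_le_exp_neg_two_mul (h0 : 0 ≤ h) :
    (1 - h) / (1 + h) ≤ exp (-(2 * h)) := by
  obtain h1 | h1 := le_or_gt 1 h
  · exact (div_nonpos_of_nonpos_of_nonneg (by linarith) (by linarith)).trans (exp_pos _).le
  have hsub : 0 < 1 - h := by linarith
  have hadd : 0 < 1 + h := by linarith
  have two_mul_le_log : 2 * h ≤ log ((1 + h) / (1 - h)) := by
    -- `2x / (x + 2) ≤ log (1 + x)` at the `x` for which `1 + x = (1 + h) / (1 - h)`.
    convert le_log_one_add_of_nonneg (x := 2 * h / (1 - h)) (by positivity) using 2 <;>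
      field_simp <;> ring
  rw [← log_le_iff_le_exp (div_pos hsub hadd), ← inv_div, log_inv]
  exact neg_le_neg two_mul_le_log

lemma one_sub_div_one_add_mul_exp_le_one (h0 : 0 ≤ h) :
    (1 - h) / (1 + h) * exp (2 * h) ≤ 1 := by
  rw [← le_div_iff₀ (exp_pos _), one_div, ← exp_neg]
  exact one_sub_div_one_add_le_exp_neg_two_mul h0

lemma one_sub_two_mul_cube_le_one_sub_div_one_add_mul_exp (h0 : 0 ≤ h) (h1 : h ≤ 1) :
    1 - 2 * h ^ 3 ≤ (1 - h) / (1 + h) * exp (2 * h) := by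
  rw [div_mul_eq_mul_div, le_div_iff₀ (by linarith)]
  calc (1 - 2 * h ^ 3) * (1 + h) = (1 + h - 2 * h ^ 3) - 2 * h ^ 4 := by ring
    _ ≤ 1 + h - 2 * h ^ 3 := sub_le_self _ (by positivity)
    _ = (1 - h) * (1 + 2 * h + (2 * h) ^ 2 / 2) := by ring
    _ ≤ (1 - h) * exp (2 * h) :=
      mul_le_mul_of_nonneg_left (quadratic_le_exp_of_nonneg (by linarith)) (by linarith)

lemma one_le_exp_div_one_add (h0 : -1 < h) : 1 ≤ exp h / (1 + h) := by
  rw [one_le_div (by linarith), add_comm]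
  exact add_one_le_exp h

lemma exp_div_one_add_le_one_add_sq (h0 : 0 ≤ h) (h1 : h ≤ 1) :
    exp h / (1 + h) ≤ 1 + h ^ 2 := by
  rw [div_le_iff₀ (by linarith)]
  have exp_le : exp h - 1 - h ≤ h ^ 2 :=
    (le_abs_self _).trans (abs_exp_sub_one_sub_id_le (abs_le.2 ⟨by linarith, h1⟩))
  calc exp h ≤ 1 + h + h ^ 2 := by linarith
    _ ≤ 1 + h + h ^ 2 + h ^ 3 := le_add_of_nonneg_right (by positivity)
    _ = (1 + h ^ 2) * (1 + h) := by ring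

lemma abs_mul_sub_one_le_add {R : Type*} [CommRing R] [LinearOrder R] [IsStrictOrderedRing R]
    {p b ε δ : R} (hp0 : 0 ≤ p) (hp1 : p ≤ 1) (hp : 1 - ε ≤ p) (hb1 : 1 ≤ b) (hb : b ≤ 1 + δ) :
    |p * b - 1| ≤ ε + δ := by
  have lower : p ≤ p * b := le_mul_of_one_le_right hp0 hb1
  have upper : p * b ≤ b := mul_le_of_le_one_left (by linarith) hp1
  rw [abs_le]
  constructor <;> linarith

lemma gaussianEigenvalue_eq_pow_mul (h : ℝ) (k : ℕ) :
    gaussianEigenvalue h k = ((1 - h) / (1 + h)) ^ k * (1 + h)⁻¹ := by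
  rw [gaussianEigenvalue, pow_succ, ← div_div, ← div_pow, div_eq_mul_inv _ (1 + h)]

lemma gaussianEigenvalue_mul_exp (h : ℝ) (k : ℕ) :
    gaussianEigenvalue h k * exp ((2 * k + 1) * h) =
      ((1 - h) / (1 + h) * exp (2 * h)) ^ k * (exp h / (1 + h)) := by
  have exp_eq : exp ((2 * k + 1) * h) = exp (2 * h) ^ k * exp h := by
    rw [← exp_nat_mul, ← exp_add]
    ring_nf
  rw [gaussianEigenvalue_eq_pow_mul, exp_eq, mul_pow]
  ring

lemma gaussianEigenvalue_le_exp (h0 : 0 ≤ h) (h1 : h ≤ 1) (k : ℕ) :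
    gaussianEigenvalue h k ≤ exp (-(2 * k * h)) := by
  have ratio_nonneg : 0 ≤ (1 - h) / (1 + h) := div_nonneg (by linarith) (by linarith)
  calc gaussianEigenvalue h k = ((1 - h) / (1 + h)) ^ k * (1 + h)⁻¹ :=
        gaussianEigenvalue_eq_pow_mul h k
    _ ≤ ((1 - h) / (1 + h)) ^ k :=
        mul_le_of_le_one_right (pow_nonneg ratio_nonneg k) (inv_le_one_of_one_le₀ (by linarith))
    _ ≤ exp (-(2 * h)) ^ k :=
        pow_le_pow_left₀ ratio_nonneg (one_sub_div_one_add_le_exp_neg_two_mul h0) k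
    _ = exp (-(2 * k * h)) := by
        rw [← exp_nat_mul]
        ring_nf

lemma abs_gaussianEigenvalue_mul_exp_sub_one_le (h0 : 0 ≤ h) (h1 : h ≤ 1) (k : ℕ) :
    |gaussianEigenvalue h k * exp ((2 * k + 1) * h) - 1| ≤ (1 + 2 * (k * h)) * h ^ 2 := by
  set a := (1 - h) / (1 + h) * exp (2 * h)
  have a_nonneg : 0 ≤ a :=
    mul_nonneg (div_nonneg (by linarith) (by linarith)) (exp_pos _).le
  have a_le_one : a ≤ 1 := one_sub_div_one_add_mul_exp_le_one h0
  have le_a : 1 - 2 * h ^ 3 ≤ a := one_sub_two_mul_cube_le_one_sub_div_one_add_mul_exp h0 h1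
  have le_a_pow : 1 - k * (2 * h ^ 3) ≤ a ^ k :=
    calc 1 - k * (2 * h ^ 3) = 1 + k * (-(2 * h ^ 3)) := by ring
      _ ≤ 1 + k * (a - 1) := by gcongr; linarith
      _ ≤ a ^ k := one_add_mul_sub_le_pow (by linarith) k
  calc |gaussianEigenvalue h k * exp ((2 * k + 1) * h) - 1|
      = |a ^ k * (exp h / (1 + h)) - 1| := by rw [gaussianEigenvalue_mul_exp]
    _ ≤ k * (2 * h ^ 3) + h ^ 2 :=
        abs_mul_sub_one_le_add (pow_nonneg a_nonneg k) (pow_le_one₀ a_nonneg a_le_one) le_a_pow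
          (one_le_exp_div_one_add (by linarith)) (exp_div_one_add_le_one_add_sq h0 h1)
    _ = (1 + 2 * (k * h)) * h ^ 2 := by ring

theorem gaussian_eigenvalue_asymptotics_general (h0 : 0 ≤ h) (h1 : h ≤ 1) (k : ℕ) :
    gaussianEigenvalue h k ≤ exp (-(2 * k * h)) ∧
      |gaussianEigenvalue h k * exp ((2 * k + 1) * h) - 1| ≤ (1 + 2 * (k * h)) * h ^ 2 :=
  ⟨gaussianEigenvalue_le_exp h0 h1 k, abs_gaussianEigenvalue_mul_exp_sub_one_le h0 h1 k⟩

end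

theorem gaussian_eigenvalue_asymptotics :
    (∀ h : ℝ, 0 < h → h < 1 → ∀ k : ℕ,
      (1 - h) ^ k / (1 + h) ^ (k + 1) ≤ Real.exp (-(2 * (k : ℝ) * h))) ∧
    ∀ γ₀ : ℝ, 0 < γ₀ → ∃ C : ℝ, 0 < C ∧
      ∀ h : ℝ, 0 < h → h ≤ 1 / 2 → ∀ k : ℕ, (k : ℝ) * h ≤ γ₀ →
        |(1 - h) ^ k / (1 + h) ^ (k + 1) * Real.exp ((2 * (k : ℝ) + 1) * h) - 1|
          ≤ C * h ^ 2 :=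
  ⟨fun _ h0 h1 k ↦ (gaussian_eigenvalue_asymptotics_general h0.le h1.le k).1,
    fun γ₀ hγ₀ ↦ ⟨1 + 2 * γ₀, by positivity, fun _ h0 h1 k hk ↦
      (gaussian_eigenvalue_asymptotics_general h0.le (by linarith) k).2.trans (by gcongr)⟩⟩
end
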